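/- Let R be a commutative ring, z ∈ R, and A : ℕ × ℕ → R a family of elements satisfying z·A(i,0)·A(0,j) = A(i+1,j) − A(i,j+1) for all i, j ≥ 0. For i, j ∈ ℕ define D(i,j) ∈ R ⊗ R by D(i,j) = A(i,j) ⊗ 1 + 1 ⊗ A(i,j) + z·∑_{k=0}^{i−1} A(k,0) ⊗ A(i−1−k, j) − z·∑_{l=0}^{j−1} A(0,l) ⊗ A(i, j−1−l) − z²·∑_{k=0}^{i−1} ∑_{l=0}^{j−1} A(k,0)·A(0,l) ⊗ A(i−1−k, j−1−l). Then for every n ≥ 1, ∑_{k=0}^{n−1} D(k, n−1−k) = (∑_{k=0}^{n−1} A(k, n−1−k)) ⊗ 1 + 1 ⊗ (∑_{k=0}^{n−1} A(k, n−1−k)). -/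

import Mathlib

open scoped TensorProduct

/-!
In generating functions, put `α = ∑ A(k,0) tᵏ`, `β = ∑ A(0,l) tˡ` and `γ = ∑ A(i,j) tⁱ⁺ʲ`. Then
`∑ D(i,j) tⁱ⁺ʲ = γ ⊗ 1 + 1 ⊗ γ + (t z α - t z β - t² z² α β) ⊗ γ`. The skein relation telescopes
along antidiagonals to `t z α β = α - β`, so the bracket vanishes.
-/

/-- The sum of `f i j` over all `i + j + 1 = n`, i.e. the coefficient of `tⁿ` in
`t * ∑ f i j tⁱ⁺ʲ`. Because of the shift by one it is empty for `n = 0`, so that nested sums can be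
reassociated without boundary cases. -/
def antidiagSum {M : Type*} [AddCommMonoid M] (n : ℕ) (f : ℕ → ℕ → M) : M :=
  ∑ k ∈ Finset.range n, f k (n - 1 - k)

section AddCommMonoid

variable {M : Type*} [AddCommMonoid M] (n : ℕ)

theorem antidiagSum_congr {f g : ℕ → ℕ → M} (h : ∀ i j, i + j + 1 = n → f i j = g i j) :
    antidiagSum n f = antidiagSum n g :=
  Finset.sum_congr rfl fun k hk => h k _ (by have := Finset.mem_range.mp hk; omega)

theorem antidiagSum_add (f g : ℕ → ℕ → M) :
    antidiagSum n (fun i j => f i j + g i j) = antidiagSum n f + antidiagSum n g :=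
  Finset.sum_add_distrib

theorem antidiagSum_comm (f : ℕ → ℕ → M) :
    antidiagSum n f = antidiagSum n fun i j => f j i := by
  calc antidiagSum n f
      = antidiagSum n fun i _ => f (n - 1 - i) (n - 1 - (n - 1 - i)) :=
        (Finset.sum_range_reflect (fun k => f k (n - 1 - k)) n).symm
    _ = antidiagSum n fun i j => f j i := antidiagSum_congr n fun i j h => by
        rw [show n - 1 - i = j by omega, show n - 1 - j = i by omega]

theorem antidiagSum_assoc (F : ℕ → ℕ → ℕ → M) :
    antidiagSum n (fun i c => antidiagSum i fun a b => F a b c) =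
      antidiagSum n fun a j => antidiagSum j fun b c => F a b c := by
  cases n with
  | zero => rfl
  | succ n =>
    let G (a b : ℕ) : M := F a b (n - 1 - a - b)
    calc antidiagSum (n + 1) (fun i c => antidiagSum i fun a b => F a b c)
        = ∑ i ∈ Finset.range n, ∑ a ∈ Finset.range (i + 1), G a (i - a) := by
          simp only [antidiagSum, Finset.sum_range_succ' _ n, Finset.sum_range_zero, add_zero]
          refine Finset.sum_congr rfl fun i _ => Finset.sum_congr rfl fun a ha => ?_
          have := Finset.mem_range.mp ha
          rw [Nat.add_sub_cancel, show n + 1 - 1 - (i + 1) = n - 1 - a - (i - a) by omega]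
      _ = ∑ a ∈ Finset.range n, ∑ b ∈ Finset.range (n - a), G a b :=
          Finset.sum_range_diag_flip n G
      _ = antidiagSum (n + 1) fun a j => antidiagSum j fun b c => F a b c := by
          simp only [antidiagSum, Finset.sum_range_succ _ n, Nat.add_sub_cancel, Nat.sub_self,
            Finset.sum_range_zero, add_zero, G, Nat.sub_right_comm]

theorem antidiagSum_left_comm (F : ℕ → ℕ → ℕ → M) :
    antidiagSum n (fun a j => antidiagSum j fun b c => F a b c) =
      antidiagSum n fun b j => antidiagSum j fun a c => F a b c := by
  rw [← antidiagSum_assoc, ← antidiagSum_assoc]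
  exact antidiagSum_congr n fun i c _ => antidiagSum_comm i fun a b => F a b c

end AddCommMonoid

section AddCommGroup

variable {M : Type*} [AddCommGroup M] (n : ℕ)

theorem antidiagSum_sub (f g : ℕ → ℕ → M) :
    antidiagSum n (fun i j => f i j - g i j) = antidiagSum n f - antidiagSum n g :=
  Finset.sum_sub_distrib ..

theorem antidiagSum_telescope (f : ℕ → ℕ → M) :
    antidiagSum n (fun i j => f (i + 1) j - f i (j + 1)) = f n 0 - f 0 n := by
  calc antidiagSum n (fun i j => f (i + 1) j - f i (j + 1))
      = antidiagSum n (fun i _ => f (i + 1) (n - (i + 1)) - f i (n - i)) :=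
        antidiagSum_congr n fun i j h => by
          rw [show n - (i + 1) = j by omega, show n - i = j + 1 by omega]
    _ = f n 0 - f 0 n := by
        rw [antidiagSum, Finset.sum_range_sub fun i => f i (n - i), Nat.sub_self, Nat.sub_zero]

end AddCommGroup

section TensorProduct

variable {S P M : Type*} [CommSemiring S] [AddCommMonoid P] [Module S P] [AddCommMonoid M]
  [Module S M] (n : ℕ)

theorem antidiagSum_tmul (f : ℕ → ℕ → P) (m : M) :
    antidiagSum n f ⊗ₜ[S] m = antidiagSum n fun i j => f i j ⊗ₜ[S] m :=
  TensorProduct.sum_tmul ..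

theorem tmul_antidiagSum (p : P) (f : ℕ → ℕ → M) :
    p ⊗ₜ[S] antidiagSum n f = antidiagSum n fun i j => p ⊗ₜ[S] f i j :=
  TensorProduct.tmul_sum ..

theorem antidiagSum_tmul_split_left (u : ℕ → P) (B : ℕ → ℕ → M) :
    antidiagSum n (fun i j => antidiagSum i fun k a => u k ⊗ₜ[S] B a j) =
      antidiagSum n fun p q => u p ⊗ₜ[S] antidiagSum q B := by
  simp only [tmul_antidiagSum, antidiagSum_assoc n fun k a j => u k ⊗ₜ[S] B a j]

theorem antidiagSum_tmul_split_right (u : ℕ → P) (B : ℕ → ℕ → M) :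
    antidiagSum n (fun i j => antidiagSum j fun l b => u l ⊗ₜ[S] B i b) =
      antidiagSum n fun p q => u p ⊗ₜ[S] antidiagSum q B := by
  simp only [tmul_antidiagSum, antidiagSum_left_comm n fun i l b => u l ⊗ₜ[S] B i b]

theorem antidiagSum_tmul_split_both (w : ℕ → ℕ → P) (B : ℕ → ℕ → M) :
    antidiagSum n (fun i j => antidiagSum i fun k a => antidiagSum j fun l b =>
        w k l ⊗ₜ[S] B a b) =
      antidiagSum n fun p q => antidiagSum p w ⊗ₜ[S] antidiagSum q B := by
  calc
    _ = antidiagSum n (fun k m => antidiagSum m fun a j => antidiagSum j fun l b =>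
          w k l ⊗ₜ[S] B a b) :=
        antidiagSum_assoc n fun k a j => antidiagSum j fun l b => w k l ⊗ₜ[S] B a b
    _ = antidiagSum n (fun k m => antidiagSum m fun l q => w k l ⊗ₜ[S] antidiagSum q B) :=
        antidiagSum_congr n fun k m _ => antidiagSum_tmul_split_right m (w k) B
    _ = antidiagSum n (fun p q => antidiagSum p fun k l => w k l ⊗ₜ[S] antidiagSum q B) :=
        (antidiagSum_assoc n fun k l q => w k l ⊗ₜ[S] antidiagSum q B).symm
    _ = antidiagSum n fun p q => antidiagSum p w ⊗ₜ[S] antidiagSum q B := by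
        simp only [antidiagSum_tmul]

end TensorProduct

theorem antidiagSum_mul_eq_sub_of_skein {R : Type*} [Ring R] (z : R) (A : ℕ → ℕ → R)
    (hA : ∀ i j : ℕ, z * A i 0 * A 0 j = A (i + 1) j - A i (j + 1)) (n : ℕ) :
    antidiagSum n (fun k l => z ^ 2 * (A k 0 * A 0 l)) = z * A n 0 - z * A 0 n := by
  have skein (k l : ℕ) : z ^ 2 * (A k 0 * A 0 l) = z * A (k + 1) l - z * A k (l + 1) := by
    rw [← mul_sub, ← hA, pow_two, mul_assoc, mul_assoc]
  simp only [skein, antidiagSum_telescope n fun i j => z * A i j]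

theorem stmt_0_general {S R : Type*} [CommSemiring S] [Ring R] [Module S R] (z : R)
    (A : ℕ → ℕ → R) (hA : ∀ i j : ℕ, z * A i 0 * A 0 j = A (i + 1) j - A i (j + 1))
    (D : ℕ → ℕ → R ⊗[S] R)
    (hD : ∀ i j : ℕ,
      D i j = A i j ⊗ₜ[S] (1 : R) + (1 : R) ⊗ₜ[S] A i j
        + ∑ k ∈ Finset.range i, (z * A k 0) ⊗ₜ[S] A (i - 1 - k) j
        - ∑ l ∈ Finset.range j, (z * A 0 l) ⊗ₜ[S] A i (j - 1 - l)
        - ∑ k ∈ Finset.range i, ∑ l ∈ Finset.range j,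
            (z ^ 2 * (A k 0 * A 0 l)) ⊗ₜ[S] A (i - 1 - k) (j - 1 - l))
    (n : ℕ) :
    ∑ k ∈ Finset.range n, D k (n - 1 - k)
      = (∑ k ∈ Finset.range n, A k (n - 1 - k)) ⊗ₜ[S] (1 : R)
        + (1 : R) ⊗ₜ[S] (∑ k ∈ Finset.range n, A k (n - 1 - k)) := by
  have hD' (i j : ℕ) : D i j = A i j ⊗ₜ[S] (1 : R) + (1 : R) ⊗ₜ[S] A i j
      + antidiagSum i (fun k a => (z * A k 0) ⊗ₜ[S] A a j)
      - antidiagSum j (fun l b => (z * A 0 l) ⊗ₜ[S] A i b)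
      - antidiagSum i (fun k a => antidiagSum j fun l b =>
          (z ^ 2 * (A k 0 * A 0 l)) ⊗ₜ[S] A a b) := hD i j
  change antidiagSum n (fun i j => D i j) = antidiagSum n A ⊗ₜ[S] 1 + 1 ⊗ₜ[S] antidiagSum n A
  have cancel : antidiagSum n (fun i j => antidiagSum i fun k a => antidiagSum j fun l b =>
        (z ^ 2 * (A k 0 * A 0 l)) ⊗ₜ[S] A a b) =
      antidiagSum n (fun i j => antidiagSum i fun k a => (z * A k 0) ⊗ₜ[S] A a j) -
        antidiagSum n (fun i j => antidiagSum j fun l b => (z * A 0 l) ⊗ₜ[S] A i b) := by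
    rw [antidiagSum_tmul_split_left n (fun k => z * A k 0),
      antidiagSum_tmul_split_right n (fun l => z * A 0 l),
      antidiagSum_tmul_split_both n (fun k l => z ^ 2 * (A k 0 * A 0 l))]
    simp only [antidiagSum_mul_eq_sub_of_skein z A hA, TensorProduct.sub_tmul, antidiagSum_sub]
  simp only [hD', antidiagSum_sub, antidiagSum_add, cancel, antidiagSum_tmul, tmul_antidiagSum]
  abel

theorem stmt_0 {R : Type*} [CommRing R] (z : R) (A : ℕ → ℕ → R)
    (hA : ∀ i j : ℕ, z * A i 0 * A 0 j = A (i + 1) j - A i (j + 1))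
    (D : ℕ → ℕ → R ⊗[ℤ] R)
    (hD : ∀ i j : ℕ,
      D i j = A i j ⊗ₜ[ℤ] (1 : R) + (1 : R) ⊗ₜ[ℤ] A i j
        + ∑ k ∈ Finset.range i, (z * A k 0) ⊗ₜ[ℤ] A (i - 1 - k) j
        - ∑ l ∈ Finset.range j, (z * A 0 l) ⊗ₜ[ℤ] A i (j - 1 - l)
        - ∑ k ∈ Finset.range i, ∑ l ∈ Finset.range j,
            (z ^ 2 * (A k 0 * A 0 l)) ⊗ₜ[ℤ] A (i - 1 - k) (j - 1 - l))
    (n : ℕ) (hn : 1 ≤ n) :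
    ∑ k ∈ Finset.range n, D k (n - 1 - k)
      = (∑ k ∈ Finset.range n, A k (n - 1 - k)) ⊗ₜ[ℤ] (1 : R)
        + (1 : R) ⊗ₜ[ℤ] (∑ k ∈ Finset.range n, A k (n - 1 - k)) :=
  stmt_0_general z A hA D hD n
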